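/- arXiv:quant-ph/0510076 — 9 statements merged into one kernel-verified Lean document; each statement's English description precedes it below -/
import Mathlib

section
/- Let V be a real inner product space and let x_1, x_2, y_1, y_2 ∈ V be unit vectors. Then ⟪x_1, y_1⟫ + ⟪x_1, y_2⟫ + ⟪x_2, y_1⟫ − ⟪x_2, y_2⟫ ≤ 2√2. -/
/-- Vector form of Tsirelson's CHSH bound: for unit vectors `x₁ x₂ y₁ y₂` in a real
inner product space, `⟪x₁,y₁⟫ + ⟪x₁,y₂⟫ + ⟪x₂,y₁⟫ - ⟪x₂,y₂⟫ ≤ 2√2`. -/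
theorem chsh_vector_bound
    (V : Type*) [NormedAddCommGroup V] [InnerProductSpace ℝ V]
    (x₁ x₂ y₁ y₂ : V)
    (hx₁ : ‖x₁‖ = 1) (hx₂ : ‖x₂‖ = 1) (hy₁ : ‖y₁‖ = 1) (hy₂ : ‖y₂‖ = 1) :
    inner (𝕜 := ℝ) x₁ y₁ + inner (𝕜 := ℝ) x₁ y₂ + inner (𝕜 := ℝ) x₂ y₁
        - inner (𝕜 := ℝ) x₂ y₂ ≤ 2 * Real.sqrt 2 := by
  have h1 := real_inner_le_norm x₁ (y₁ + y₂)
  have h2 := real_inner_le_norm x₂ (y₁ - y₂)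
  have h3 := parallelogram_law_with_norm ℝ y₁ y₂
  rw [inner_add_right, hx₁, one_mul] at h1
  rw [inner_sub_right, hx₂, one_mul] at h2
  rw [hy₁, hy₂] at h3
  have h4 : (0 : ℝ) ≤ 2 * Real.sqrt 2 := by positivity
  have h5 : Real.sqrt 2 ^ 2 = 2 := Real.sq_sqrt (by norm_num)
  have h6 : ‖y₁ + y₂‖ + ‖y₁ - y₂‖ ≤ 2 * Real.sqrt 2 := by
    refine le_of_abs_le (abs_le_of_sq_le_sq ?_ h4)
    nlinarith [sq_nonneg (‖y₁ + y₂‖ - ‖y₁ - y₂‖)]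
  linarith
end

section
/- Let n ≥ 1, let V be a real inner product space, and let x_1,…,x_n, y_1,…,y_n ∈ V be unit vectors. Then ∑_{i=1}^{n} ⟪x_i, y_i⟫ + ∑_{i=1}^{n-1} ⟪x_{i+1}, y_i⟫ − ⟪x_1, y_n⟫ ≤ 2n·cos(π/(2n)). -/
lemma chain_step {V : Type*} [NormedAddCommGroup V] [InnerProductSpace ℝ V]
    (u v w : V) (hu : ‖u‖ = 1) (hv : ‖v‖ = 1) (hw : ‖w‖ = 1) (a b : ℝ)
    (hs : 0 < Real.sin b) (ht : 0 < Real.sin (b + a)) :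
    inner ℝ v w ≤ Real.cos a
      + Real.sin a * (Real.cos b / Real.sin b - Real.cos (b + a) / Real.sin (b + a))
      + Real.sin a * (inner ℝ u w / Real.sin (b + a) - inner ℝ u v / Real.sin b) := by
  have h : 0 ≤ ‖Real.sin a • u - Real.sin (b + a) • v + Real.sin b • w‖ ^ 2 := by positivity
  rw [@norm_add_sq_real, @norm_sub_sq_real] at h
  simp only [norm_smul, inner_sub_left, inner_smul_left, inner_smul_right, hu, hv, hw, mul_one,
    Real.norm_eq_abs, sq_abs, conj_trivial] at h
  have e1 : Real.cos b * Real.sin (b + a) - Real.cos (b + a) * Real.sin b = Real.sin a := by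
    have := Real.sin_sub (b + a) b
    rw [add_sub_cancel_left] at this
    linarith
  have e2 : Real.sin a ^ 2 = Real.sin b ^ 2 + Real.sin (b + a) ^ 2
      - 2 * Real.sin b * Real.sin (b + a) * Real.cos a := by
    rw [Real.sin_add]
    have h1 := Real.sin_sq_add_cos_sq a
    have h2 := Real.sin_sq_add_cos_sq b
    have h3 : Real.cos a ^ 2 = 1 - Real.sin a ^ 2 := by linarith
    have h4 : Real.cos b ^ 2 = 1 - Real.sin b ^ 2 := by linarith
    ring_nf
    rw [h3, h4]
    ring
  generalize Real.sin (b + a) = t at *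
  generalize Real.sin b = s at *
  generalize Real.cos (b + a) = c' at *
  generalize Real.cos b = c at *
  generalize Real.sin a = r at *
  generalize Real.cos a = d at *
  have : d + r * (c / s - c' / t) + r * (inner ℝ u w / t - inner ℝ u v / s)
      = (s * t * d + r * (c * t - c' * s) + r * (inner ℝ u w * s - inner ℝ u v * t)) / (s * t) := by
    field_simp
  rw [this, le_div_iff₀ (by positivity), e1]
  nlinarith

lemma chain_sum {V : Type*} [NormedAddCommGroup V] [InnerProductSpace ℝ V]
    (z : ℕ → V) (a : ℝ) (ha : 0 < a) (j : ℕ) (hz : ∀ i ≤ j + 1, ‖z i‖ = 1)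
    (hj : ((j : ℝ) + 1) * a < Real.pi) :
    ∑ k ∈ Finset.range (j + 1), inner ℝ (z k) (z (k + 1)) ≤
      ((j : ℝ) + 1) * Real.cos a
        - Real.sin a * (Real.cos (((j : ℝ) + 1) * a) / Real.sin (((j : ℝ) + 1) * a))
        + Real.sin a * (inner ℝ (z 0) (z (j + 1)) / Real.sin (((j : ℝ) + 1) * a)) := by
  induction j with
  | zero =>
    have : 0 < Real.sin a := Real.sin_pos_of_pos_of_lt_pi ha (by simpa using hj)
    simp
    field_simp
    linarith
  | succ j ih =>
    push_cast at hj ⊢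
    have ih := ih (fun i hi => hz i (by omega)) (by nlinarith)
    have e : ((j : ℝ) + 1 + 1) * a = ((j : ℝ) + 1) * a + a := by ring
    rw [e] at hj ⊢
    rw [Finset.sum_range_succ]
    have := chain_step (z 0) (z (j + 1)) (z (j + 1 + 1)) (hz _ (by omega)) (hz _ (by omega))
      (hz _ (by omega)) a (((j : ℝ) + 1) * a)
      (Real.sin_pos_of_pos_of_lt_pi (by positivity) (by linarith))
      (Real.sin_pos_of_pos_of_lt_pi (by positivity) (by linarith))
    linarith

lemma chain_reindex {V : Type*} [NormedAddCommGroup V] [InnerProductSpace ℝ V]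
    (x y z : ℕ → V) (h0 : ∀ i, z (2 * i) = x i) (h1 : ∀ i, z (2 * i + 1) = y i) (N : ℕ) :
    ∑ k ∈ Finset.range (2 * N + 1), inner ℝ (z k) (z (k + 1)) =
      ∑ i ∈ Finset.range (N + 1), inner ℝ (x i) (y i)
      + ∑ i ∈ Finset.range N, inner ℝ (x (i + 1)) (y i) := by
  induction N with
  | zero => simp [← h0, ← h1]
  | succ N ih =>
    rw [show 2 * (N + 1) + 1 = 2 * N + 1 + 1 + 1 by ring, Finset.sum_range_succ,
      Finset.sum_range_succ, ih, Finset.sum_range_succ _ (N + 1),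
      Finset.sum_range_succ (fun i => inner ℝ (x (i + 1)) (y i)) N,
      show 2 * N + 1 + 1 = 2 * (N + 1) by ring, h0, h1, h1, real_inner_comm (x (N + 1)) (y N)]
    ring

/-- Vector form of the Tsirelson bound for the chained CHSH inequality with `n` settings:
for unit vectors `x 0, …, x (n-1), y 0, …, y (n-1)` in a real inner product space,
`∑ ⟪x i, y i⟫ + ∑ ⟪x (i+1), y i⟫ - ⟪x 0, y (n-1)⟫ ≤ 2 n cos (π / (2n))`. -/
theorem chained_chsh_vector_bound
    (n : ℕ) (hn : 1 ≤ n)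
    (V : Type*) [NormedAddCommGroup V] [InnerProductSpace ℝ V]
    (x y : ℕ → V) (hx : ∀ i < n, ‖x i‖ = 1) (hy : ∀ i < n, ‖y i‖ = 1) :
    (∑ i ∈ Finset.range n, inner (𝕜 := ℝ) (x i) (y i))
      + (∑ i ∈ Finset.range (n - 1), inner (𝕜 := ℝ) (x (i + 1)) (y i))
      - inner (𝕜 := ℝ) (x 0) (y (n - 1))
      ≤ 2 * n * Real.cos (Real.pi / (2 * n)) := by
  obtain ⟨N, rfl⟩ : ∃ N, n = N + 1 := ⟨n - 1, by omega⟩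
  simp only [Nat.add_sub_cancel]
  let z : ℕ → V := fun k => if k % 2 = 0 then x (k / 2) else y (k / 2)
  have h0 : ∀ i, z (2 * i) = x i := fun i => by simp [z]
  have h1 : ∀ i, z (2 * i + 1) = y i := fun i => by
    have e1 : (2 * i + 1) % 2 = 1 := by omega
    have e2 : (2 * i + 1) / 2 = i := by omega
    simp [z, e1, e2]
  rw [← chain_reindex x y z h0 h1 N]
  have hz : ∀ i ≤ 2 * N + 1, ‖z i‖ = 1 := by
    intro i hi
    simp only [z]
    split_ifs
    · exact hx _ (by omega)
    · exact hy _ (by omega)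
  set a : ℝ := Real.pi / (2 * ((N + 1 : ℕ) : ℝ)) with ha
  have hpos : 0 < a := by positivity
  have hm : 2 * ((N : ℝ) + 1) * a = Real.pi := by
    rw [ha]; push_cast; field_simp
  have hb : (((2 * N : ℕ) : ℝ) + 1) * a = Real.pi - a := by
    rw [← hm]; push_cast; ring
  have key := chain_sum z a hpos (2 * N) hz (by rw [hb]; linarith)
  rw [hb, Real.sin_pi_sub, Real.cos_pi_sub, h1, show z 0 = x 0 from h0 0] at key
  have hlt : a < Real.pi := by
    have : 0 ≤ (N : ℝ) * a := by positivity
    nlinarith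
  have hs : 0 < Real.sin a := Real.sin_pos_of_pos_of_lt_pi hpos hlt
  rw [mul_div_cancel₀ _ hs.ne', mul_div_cancel₀ _ hs.ne'] at key
  push_cast at key ⊢
  linarith
end

section
/- Let n ≥ 1 and for k ∈ {1,…,n} define unit vectors in ℝ² by x_k = (cos φ_k, sin φ_k) and y_k = (cos ψ_k, sin ψ_k), where φ_k = (π/(2n))·(2k − 2) and ψ_k = (π/(2n))·(2k − 1). Then ∑_{k=1}^{n} ⟪x_k, y_k⟫ + ∑_{k=1}^{n-1} ⟪x_{k+1}, y_k⟫ − ⟪x_1, y_n⟫ = 2n·cos(π/(2n)); in particular each of the terms ⟪x_k, y_k⟫, ⟪x_{k+1}, y_k⟫, and −⟪x_1, y_n⟫ equals cos(π/(2n)). -/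
/-- The optimal vectors for the chained CHSH inequality: with
`x k = (cos φ_k, sin φ_k)`, `y k = (cos ψ_k, sin ψ_k)` in `ℝ²`, where
`φ_k = (π/(2n))·2k` and `ψ_k = (π/(2n))·(2k+1)` for `k = 0, …, n-1`
(0-indexed version of `φ_k = (π/(2n))(2k-2)`, `ψ_k = (π/(2n))(2k-1)` for `k = 1, …, n`),
each vector is a unit vector, each term of the chained CHSH expression equals
`cos (π/(2n))`, and the whole expression equals `2 n cos (π/(2n))`. -/
theorem chained_chsh_optimal_vectors
    (n : ℕ) (hn : 1 ≤ n)
    (φ ψ : ℕ → ℝ)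
    (hφ : ∀ k, φ k = Real.pi / (2 * n) * (2 * k))
    (hψ : ∀ k, ψ k = Real.pi / (2 * n) * (2 * k + 1))
    (x y : ℕ → EuclideanSpace ℝ (Fin 2))
    (hx : ∀ k, x k = (WithLp.equiv 2 (Fin 2 → ℝ)).symm ![Real.cos (φ k), Real.sin (φ k)])
    (hy : ∀ k, y k = (WithLp.equiv 2 (Fin 2 → ℝ)).symm ![Real.cos (ψ k), Real.sin (ψ k)]) :
    (∀ k, ‖x k‖ = 1) ∧ (∀ k, ‖y k‖ = 1) ∧
    (∀ k < n, inner (𝕜 := ℝ) (x k) (y k) = Real.cos (Real.pi / (2 * n))) ∧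
    (∀ k < n - 1, inner (𝕜 := ℝ) (x (k + 1)) (y k) = Real.cos (Real.pi / (2 * n))) ∧
    (-(inner (𝕜 := ℝ) (x 0) (y (n - 1)) : ℝ) = Real.cos (Real.pi / (2 * n))) ∧
    (∑ k ∈ Finset.range n, inner (𝕜 := ℝ) (x k) (y k))
      + (∑ k ∈ Finset.range (n - 1), inner (𝕜 := ℝ) (x (k + 1)) (y k))
      - inner (𝕜 := ℝ) (x 0) (y (n - 1))
      = 2 * n * Real.cos (Real.pi / (2 * n)) := by
  have hin : ∀ j k, inner (𝕜 := ℝ) (x j) (y k) = Real.cos (ψ k - φ j) := by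
    intro j k
    rw [hx, hy, Real.cos_sub]
    simp [PiLp.inner_apply, Fin.sum_univ_two]
  have h1 : ∀ k, ‖x k‖ = 1 := by
    intro k
    rw [hx, EuclideanSpace.norm_eq]
    simp [Fin.sum_univ_two]
  have h2 : ∀ k, ‖y k‖ = 1 := by
    intro k
    rw [hy, EuclideanSpace.norm_eq]
    simp [Fin.sum_univ_two]
  have h3 : ∀ k, inner (𝕜 := ℝ) (x k) (y k) = Real.cos (Real.pi / (2 * n)) := by
    intro k
    rw [hin, hφ, hψ]
    congr 1
    ring
  have h4 : ∀ k, inner (𝕜 := ℝ) (x (k + 1)) (y k) = Real.cos (Real.pi / (2 * n)) := by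
    intro k
    rw [hin, hφ, hψ, ← Real.cos_neg]
    congr 1
    push_cast
    ring
  have hn0 : (n : ℝ) ≠ 0 := by
    have : n ≠ 0 := by omega
    exact_mod_cast this
  have h5 : -(inner (𝕜 := ℝ) (x 0) (y (n - 1)) : ℝ) = Real.cos (Real.pi / (2 * n)) := by
    rw [hin, hφ, hψ, ← Real.cos_pi_sub]
    congr 1
    push_cast [Nat.cast_sub hn]
    field_simp
    ring
  refine ⟨h1, h2, fun k _ => h3 k, fun k _ => h4 k, h5, ?_⟩
  rw [sub_eq_add_neg, h5, Finset.sum_congr rfl (fun k _ => h3 k),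
    Finset.sum_congr rfl (fun k _ => h4 k)]
  simp only [Finset.sum_const, Finset.card_range, nsmul_eq_mul]
  push_cast [Nat.cast_sub hn]
  ring
end

section
/- Let n ≥ 1 and let A be the n×n complex matrix with A_{jj} = 1 for all j, A_{j,j+1} = 1 for j = 1,…,n−1, A_{n,1} = −1, and all other entries 0. Then for each s ∈ {0,…,n−1}, the number 2 + 2·cos(π(2s+1)/n) is an eigenvalue of the positive semidefinite matrix Aᴴ·A (where Aᴴ is the conjugate transpose); equivalently, the singular values of A are √(2 + 2·cos(π(2s+1)/n)) for s = 0,…,n−1. -/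
open Matrix
open scoped ComplexOrder

/-- The `n × n` matrix of the chained CHSH semidefinite program: `1`'s on the main
diagonal and first superdiagonal, `-1` in the lower-left corner, `0` elsewhere. -/
def chainA (n : ℕ) : Matrix (Fin n) (Fin n) ℂ :=
  Matrix.of fun j k =>
    (if j = k then 1 else 0) + (if (k : ℕ) = (j : ℕ) + 1 then 1 else 0)
      - (if (j : ℕ) = n - 1 ∧ (k : ℕ) = 0 then 1 else 0)

theorem chainA_mulVec (n : ℕ) (hn : 1 ≤ n) (w : ℂ) (hw : w ^ n = -1) :
    chainA n *ᵥ (fun k : Fin n => w ^ (k : ℕ)) = (1 + w) • (fun k : Fin n => w ^ (k : ℕ)) := by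
  obtain ⟨m, rfl⟩ : ∃ m, n = m + 1 := ⟨n - 1, by omega⟩
  funext j
  have h : (chainA (m+1) *ᵥ (fun k : Fin (m+1) => w ^ (k : ℕ))) j
      = ∑ k ∈ Finset.range (m+1), ((if k = (j : ℕ) then w ^ k else 0)
        + (if k = (j : ℕ) + 1 then w ^ k else 0) - (if k = 0 then (if (j : ℕ) = m then w ^ k else 0) else 0)) := by
    rw [← Fin.sum_univ_eq_sum_range (fun k => ((if k = (j : ℕ) then w ^ k else 0)
        + (if k = (j : ℕ) + 1 then w ^ k else 0) - (if k = 0 then (if (j : ℕ) = m then w ^ k else 0) else 0)))]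
    simp only [Matrix.mulVec, dotProduct, chainA, Matrix.of_apply]
    refine Finset.sum_congr rfl fun k _ => ?_
    simp only [Fin.ext_iff, Nat.add_sub_cancel, eq_comm (a := (j : ℕ)) (b := (k : ℕ))]
    split_ifs <;> simp_all
  rw [h, Finset.sum_sub_distrib, Finset.sum_add_distrib, Finset.sum_ite_eq', Finset.sum_ite_eq',
    Finset.sum_ite_eq']
  have hj := j.2
  simp only [Finset.mem_range, Pi.smul_apply, smul_eq_mul]
  by_cases hjm : (j : ℕ) = m
  · rw [hjm]
    simp
    rw [pow_succ] at hw
    linear_combination -hw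
  · have : (j : ℕ) + 1 < m + 1 := by omega
    simp [hj, hjm, show (j : ℕ) < m by omega]
    ring

theorem chainA_conjTranspose_mulVec (n : ℕ) (hn : 1 ≤ n) (w z : ℂ) (hw : w ^ n = -1)
    (hz : z * w = 1) :
    (chainA n)ᴴ *ᵥ (fun k : Fin n => w ^ (k : ℕ)) = (1 + z) • (fun k : Fin n => w ^ (k : ℕ)) := by
  obtain ⟨m, rfl⟩ : ∃ m, n = m + 1 := ⟨n - 1, by omega⟩
  funext j
  have h : ((chainA (m+1))ᴴ *ᵥ (fun k : Fin (m+1) => w ^ (k : ℕ))) j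
      = ∑ k ∈ Finset.range (m+1), ((if k = (j : ℕ) then w ^ k else 0)
        + (if k = (j : ℕ) - 1 then (if (j : ℕ) = 0 then 0 else w ^ k) else 0)
        - (if k = m then (if (j : ℕ) = 0 then w ^ k else 0) else 0)) := by
    rw [← Fin.sum_univ_eq_sum_range (fun k => ((if k = (j : ℕ) then w ^ k else 0)
        + (if k = (j : ℕ) - 1 then (if (j : ℕ) = 0 then 0 else w ^ k) else 0)
        - (if k = m then (if (j : ℕ) = 0 then w ^ k else 0) else 0)))]
    simp only [Matrix.mulVec, dotProduct, chainA, Matrix.of_apply, Matrix.conjTranspose_apply]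
    refine Finset.sum_congr rfl fun k _ => ?_
    have e : ((j : ℕ) = (k : ℕ) + 1) ↔ ((k : ℕ) = (j : ℕ) - 1 ∧ ¬ (j : ℕ) = 0) := by omega
    simp only [Fin.ext_iff, Nat.add_sub_cancel, e]
    clear e
    split_ifs <;> first | (exfalso; omega) | simp
  rw [h, Finset.sum_sub_distrib, Finset.sum_add_distrib, Finset.sum_ite_eq', Finset.sum_ite_eq',
    Finset.sum_ite_eq']
  have hj := j.2
  simp only [Finset.mem_range, Pi.smul_apply, smul_eq_mul]
  by_cases hj0 : (j : ℕ) = 0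
  · rw [hj0]
    simp
    rw [pow_succ] at hw
    linear_combination (-z) * hw + w ^ m * hz
  · obtain ⟨i, hi⟩ : ∃ i, (j : ℕ) = i + 1 := ⟨(j : ℕ) - 1, by omega⟩
    rw [hi] at hj ⊢
    simp [show i < m by omega, show i < m + 1 by omega]
    rw [pow_succ]
    linear_combination (-w ^ i) * hz

/-- The singular values of the chained CHSH matrix `A`: for each `s = 0, …, n-1`,
the number `2 + 2 cos (π(2s+1)/n)` is an eigenvalue of the positive semidefinite
matrix `Aᴴ A`, i.e. the singular values of `A` are `√(2 + 2 cos (π(2s+1)/n))`. -/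
theorem chainA_conjTranspose_mul_self_eigenvalue
    (n : ℕ) (hn : 1 ≤ n) (s : ℕ) (hs : s < n) :
    ((chainA n)ᴴ * chainA n).PosSemidef ∧
    (((2 + 2 * Real.cos (Real.pi * (2 * s + 1) / n) : ℝ) : ℂ)
        ∈ spectrum ℂ ((chainA n)ᴴ * chainA n)) := by
  refine ⟨Matrix.posSemidef_conjTranspose_mul_self _, ?_⟩
  set t : ℝ := Real.pi * (2 * s + 1) / n with ht
  have hn0 : (n : ℂ) ≠ 0 := by exact_mod_cast (by omega : n ≠ 0)
  have hw : Complex.exp (t * Complex.I) ^ n = -1 := by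
    rw [← Complex.exp_nat_mul]
    have : (n : ℂ) * (t * Complex.I) = Real.pi * Complex.I + s * (2 * Real.pi * Complex.I) := by
      rw [ht]; push_cast; field_simp; ring
    rw [this, Complex.exp_add, Complex.exp_nat_mul_two_pi_mul_I, Complex.exp_pi_mul_I, mul_one]
  have hz : Complex.exp (-t * Complex.I) * Complex.exp (t * Complex.I) = 1 := by
    rw [← Complex.exp_add]; simp
  have hc : ((2 + 2 * Real.cos t : ℝ) : ℂ)
      = (1 + Complex.exp (t * Complex.I)) * (1 + Complex.exp (-t * Complex.I)) := by
    push_cast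
    rw [Complex.two_cos]
    linear_combination -hz
  rw [← Matrix.spectrum_toLin', ← Module.End.hasEigenvalue_iff_mem_spectrum]
  refine Module.End.hasEigenvalue_of_hasEigenvector
    (x := fun k : Fin n => Complex.exp (t * Complex.I) ^ (k : ℕ)) ⟨?_, ?_⟩
  · rw [Module.End.mem_eigenspace_iff, Matrix.toLin'_apply, ← Matrix.mulVec_mulVec,
      chainA_mulVec n hn _ hw, Matrix.mulVec_smul, chainA_conjTranspose_mulVec n hn _ _ hw hz,
      smul_smul, hc]
  · intro h
    have := congrFun h ⟨0, hn⟩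
    simp at this
end

section
/- Let n ≥ 1, let A be the n×n complex matrix with A_{jj} = 1 for all j, A_{j,j+1} = 1 for j = 1,…,n−1, A_{n,1} = −1, and all other entries 0, and let W be the 2n×2n Hermitian block matrix W = [[0, Aᴴ], [A, 0]]. Then the largest eigenvalue of W equals 2·cos(π/(2n)). -/
open Matrix

/-- The `2n × 2n` Hermitian block matrix `W = [[0, Aᴴ], [A, 0]]` of the chained CHSH
semidefinite program. -/
def chainW (n : ℕ) : Matrix (Fin n ⊕ Fin n) (Fin n ⊕ Fin n) ℂ :=
  Matrix.fromBlocks 0 (chainA n)ᴴ (chainA n) 0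

def chS (n : ℕ) : Matrix (Fin n) (Fin n) ℂ :=
  Matrix.of fun j k => (if (k : ℕ) = (j : ℕ) + 1 then 1 else 0)
      - (if (j : ℕ) = n - 1 ∧ (k : ℕ) = 0 then 1 else 0)

def chT (n : ℕ) : Matrix (Fin n ⊕ Fin n) (Fin n ⊕ Fin n) ℂ :=
  Matrix.fromBlocks 0 1 (chS n) 0

noncomputable def chExt (n : ℕ) (hn : 1 ≤ n) (x : Fin n → ℂ) (m : ℕ) : ℂ :=
  (-1) ^ (m / n) * x ⟨m % n, Nat.mod_lt _ hn⟩

lemma chExt_lt (n : ℕ) (hn : 1 ≤ n) (x : Fin n → ℂ) (m : ℕ) (h : m < n) :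
    chExt n hn x m = x ⟨m, h⟩ := by
  simp [chExt, Nat.div_eq_of_lt h, Nat.mod_eq_of_lt h]

lemma chExt_add (n : ℕ) (hn : 1 ≤ n) (x : Fin n → ℂ) (m : ℕ) :
    chExt n hn x (m + n) = - chExt n hn x m := by
  simp [chExt, Nat.add_div_right m (show 0 < n from hn), pow_succ]

lemma chS_mulVec (n : ℕ) (hn : 1 ≤ n) (x : Fin n → ℂ) (j : Fin n) :
    (chS n *ᵥ x) j = chExt n hn x (j + 1) := by
  have hj := j.2
  simp only [chS, Matrix.mulVec, dotProduct, Matrix.of_apply, sub_mul, Finset.sum_sub_distrib]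
  by_cases h : (j : ℕ) + 1 < n
  · rw [chExt_lt n hn x _ h, Finset.sum_eq_single ⟨(j : ℕ) + 1, h⟩, Finset.sum_eq_zero]
    · simp
    · intro k _
      rw [if_neg (by omega)]; simp
    · intro k _ hk
      rw [if_neg (by intro h'; exact hk (Fin.ext h'))]; simp
    · simp
  · have e : (j : ℕ) + 1 = 0 + n := by omega
    rw [e, chExt_add, chExt_lt n hn x 0 hn, Finset.sum_eq_zero, 
      Finset.sum_eq_single ⟨0, hn⟩]
    · rw [if_pos (by simp; omega)]; simp
    · intro k _ hk
      rw [if_neg (by intro h'; exact hk (Fin.ext h'.2))]; simp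
    · simp
    · intro k _
      rw [if_neg (by omega)]; simp

lemma chExt_S (n : ℕ) (hn : 1 ≤ n) (x : Fin n → ℂ) (m : ℕ) :
    chExt n hn (chS n *ᵥ x) m = chExt n hn x (m + 1) := by
  induction m using Nat.strong_induction_on with
  | _ m ih =>
    by_cases h : m < n
    · rw [chExt_lt _ _ _ _ h, chS_mulVec n hn]
    · obtain ⟨k, rfl⟩ : ∃ k, m = k + n := ⟨m - n, by omega⟩
      rw [chExt_add, ih k (by omega), show k + n + 1 = (k + 1) + n by ring, chExt_add]

lemma chS_pow_mulVec (n : ℕ) (hn : 1 ≤ n) (k : ℕ) (x : Fin n → ℂ) (j : Fin n) :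
    ((chS n ^ k) *ᵥ x) j = chExt n hn x (j + k) := by
  induction k generalizing x with
  | zero => simp [chExt_lt n hn x j j.2]
  | succ k ih =>
    rw [pow_succ, ← Matrix.mulVec_mulVec, ih, chExt_S]; rfl

lemma chS_pow (n : ℕ) (hn : 1 ≤ n) : chS n ^ n = -1 := by
  apply Matrix.ext_of_mulVec_single
  intro i
  ext j
  rw [chS_pow_mulVec n hn, chExt_add, chExt_lt n hn _ _ j.2, Matrix.neg_mulVec, Matrix.one_mulVec]
  rfl

lemma chS_mul_star (n : ℕ) (hn : 1 ≤ n) : chS n * (chS n)ᴴ = 1 := by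
  ext i j
  have hi := i.2
  have hj := j.2
  have h1 : (chS n * (chS n)ᴴ) i j = (chS n *ᵥ (fun k => (chS n)ᴴ k j)) i := rfl
  rw [h1, chS_mulVec n hn, Matrix.one_apply]
  by_cases h : (i : ℕ) + 1 < n
  · rw [chExt_lt _ _ _ _ h]
    simp only [chS, conjTranspose_apply, of_apply, Fin.ext_iff]
    by_cases hij : (i : ℕ) = j
    · simp [hij]
    · simp [hij]
  · have e : (i : ℕ) + 1 = 0 + n := by omega
    rw [e, chExt_add, chExt_lt n hn _ 0 hn]
    simp only [chS, conjTranspose_apply, of_apply, Fin.ext_iff]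
    by_cases hij : (i : ℕ) = j
    · rw [if_pos hij, if_neg (by omega), if_pos ⟨by omega, trivial⟩]; simp
    · rw [if_neg hij, if_neg (by omega), if_neg (by omega)]; simp

lemma chA_eq (n : ℕ) : chainA n = 1 + chS n := by
  ext i j
  simp only [chainA, chS, of_apply, Matrix.add_apply, Matrix.one_apply]
  ring

lemma chW_eq (n : ℕ) : chainW n = chT n + (chT n)ᴴ := by
  rw [chainW, chT, chA_eq, fromBlocks_conjTranspose, fromBlocks_add]
  simp [add_comm]

lemma chT_mul_star (n : ℕ) (hn : 1 ≤ n) : chT n * (chT n)ᴴ = 1 := by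
  rw [chT, fromBlocks_conjTranspose, fromBlocks_multiply]
  simp [chS_mul_star n hn]

lemma chT_pow (n : ℕ) (hn : 1 ≤ n) : chT n ^ (2 * n) = -1 := by
  have h2 : chT n ^ 2 = fromBlocks (chS n) 0 0 (chS n) := by
    rw [pow_two, chT, fromBlocks_multiply]; simp
  have hk : ∀ k, fromBlocks (chS n) 0 0 (chS n) ^ k = fromBlocks (chS n ^ k) 0 0 (chS n ^ k) := by
    intro k
    induction k with
    | zero => simp
    | succ k ih => rw [pow_succ, ih, fromBlocks_multiply]; simp [pow_succ]
  rw [pow_mul, h2, hk, chS_pow n hn, ← fromBlocks_one, fromBlocks_neg]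
  simp

lemma pow_mulVec_eig {ι : Type*} [Fintype ι] [DecidableEq ι] (T : Matrix ι ι ℂ) (v : ι → ℂ) (η : ℂ)
    (h : T *ᵥ v = η • v) (k : ℕ) : (T ^ k) *ᵥ v = η ^ k • v := by
  induction k with
  | zero => simp
  | succ k ih => rw [pow_succ, ← Matrix.mulVec_mulVec, h, Matrix.mulVec_smul, ih, smul_smul, pow_succ']

lemma bound_of_root (n : ℕ) (hn : 1 ≤ n) (l : ℝ) (η : ℂ) (h : η ^ (2 * n) = -1)
    (hl : (l : ℂ) * η = η ^ 2 + 1) : l ≤ 2 * Real.cos (Real.pi / (2 * n)) := by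
  have hn' : (0 : ℝ) < 2 * n := by positivity
  have hnorm : ‖η‖ = 1 := by
    have : ‖η‖ ^ (2 * n) = 1 := by rw [← norm_pow, h]; simp
    exact (pow_eq_one_iff_of_nonneg (norm_nonneg _) (by omega)).1 this
  set φ := η.arg with hφ
  have he : η = Complex.exp (φ * Complex.I) := by
    have := Complex.norm_mul_exp_arg_mul_I η
    rw [hnorm] at this; simpa using this.symm
  have hη0 : η ≠ 0 := by rw [he]; exact Complex.exp_ne_zero _
  have hl2 : l = 2 * Real.cos φ := by
    have : (l : ℂ) = 2 * Complex.cos φ := by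
      rw [Complex.two_cos, ← neg_mul_eq_neg_mul, Complex.exp_neg, ← he]
      field_simp
      exact hl
    exact_mod_cast this
  have hc : Real.cos ((2 * n) * |φ|) = -1 := by
    have h3 : Real.cos ((2 * n) * φ) = -1 := by
      rw [he, ← Complex.exp_nat_mul] at h
      have := congrArg Complex.re h
      rw [show ((2 * n : ℕ) : ℂ) * (φ * Complex.I) = (((2 * n) * φ : ℝ) : ℂ) * Complex.I by
        push_cast; ring, Complex.exp_ofReal_mul_I_re] at this
      simpa using this
    rcases abs_cases φ with ⟨h, _⟩ | ⟨h, _⟩ <;> rw [h]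
    · exact h3
    · rw [mul_neg, Real.cos_neg, h3]
  rw [hl2, ← Real.cos_abs φ]
  have key : Real.pi / (2 * n) ≤ |φ| := by
    by_contra hlt
    push Not at hlt
    rw [lt_div_iff₀ hn'] at hlt
    have := Real.cos_lt_cos_of_nonneg_of_le_pi (x := (2 * n) * |φ|) (y := Real.pi)
      (by positivity) le_rfl (by linarith)
    rw [Real.cos_pi, hc] at this
    exact lt_irrefl _ this
  have := Real.cos_le_cos_of_nonneg_of_le_pi (x := Real.pi / (2 * n)) (y := |φ|)
    (by positivity) (Complex.abs_arg_le_pi η) key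
  linarith

lemma chW_bound (n : ℕ) (hn : 1 ≤ n) (l : ℝ) (v : Fin n ⊕ Fin n → ℂ) (hv : v ≠ 0)
    (h : chainW n *ᵥ v = (l : ℂ) • v) : l ≤ 2 * Real.cos (Real.pi / (2 * n)) := by
  have hq : chT n *ᵥ (chT n *ᵥ v) + v = (l : ℂ) • (chT n *ᵥ v) := by
    rw [← Matrix.mulVec_smul, ← h, chW_eq, Matrix.add_mulVec, Matrix.mulVec_add]
    rw [Matrix.mulVec_mulVec v (chT n) (chT n)ᴴ, chT_mul_star n hn, Matrix.one_mulVec]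
  have fin : ∀ (η : ℂ) (u : Fin n ⊕ Fin n → ℂ), u ≠ 0 → chT n *ᵥ u = η • u →
      η ^ (2 * n) = -1 := by
    intro η u hu hT
    have := pow_mulVec_eig _ _ _ hT (2 * n)
    rw [chT_pow n hn, Matrix.neg_mulVec, Matrix.one_mulVec] at this
    have h0 : (η ^ (2 * n) + 1) • u = 0 := by rw [add_smul, ← this]; simp
    rcases smul_eq_zero.1 h0 with h0 | h0
    · exact eq_neg_of_add_eq_zero_left h0
    · exact absurd h0 hu
  obtain ⟨s, hs⟩ := IsAlgClosed.exists_pow_nat_eq ((l : ℂ) ^ 2 - 4) (n := 2) (by norm_num)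
  set a : ℂ := (l + s) / 2 with ha
  set b : ℂ := (l - s) / 2 with hb
  have hab : a + b = l := by rw [ha, hb]; ring
  have hab1 : a * b = 1 := by rw [ha, hb]; linear_combination (-1/4 : ℂ) * hs
  by_cases hu : chT n *ᵥ v - b • v = 0
  · refine bound_of_root n hn l b (fin b v hv (sub_eq_zero.1 hu)) ?_
    rw [← hab]; linear_combination hab1
  · refine bound_of_root n hn l a (fin a _ hu ?_) ?_
    · rw [Matrix.mulVec_sub, Matrix.mulVec_smul, eq_sub_of_add_eq hq, ← hab, smul_sub, smul_smul, hab1,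
        add_smul, one_smul]
      abel
    · rw [← hab]; linear_combination hab1

lemma chW_attain (n : ℕ) (hn : 1 ≤ n) : ∃ v : Fin n ⊕ Fin n → ℂ, v ≠ 0 ∧
    chainW n *ᵥ v = ((2 * Real.cos (Real.pi / (2 * n)) : ℝ) : ℂ) • v := by
  set ω : ℂ := Complex.exp ((Real.pi / (2 * n) : ℝ) * Complex.I) with hω
  have hω0 : ω ≠ 0 := Complex.exp_ne_zero _
  have hn0 : (n : ℂ) ≠ 0 := by exact_mod_cast (by omega : n ≠ 0)
  have hpow : ω ^ (2 * n) = -1 := by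
    rw [hω, ← Complex.exp_nat_mul, ← Complex.exp_pi_mul_I]
    congr 1
    push_cast
    field_simp
  have hc : ((2 * Real.cos (Real.pi / (2 * n)) : ℝ) : ℂ) = ω + ω⁻¹ := by
    rw [hω, ← Complex.exp_neg, Complex.ofReal_mul, Complex.ofReal_cos, neg_mul_eq_neg_mul]
    rw [Complex.ofReal_ofNat]; exact Complex.two_cos _
  set x : Fin n → ℂ := fun k => ω ^ (2 * (k : ℕ)) with hx
  have hS : chS n *ᵥ x = ω ^ 2 • x := by
    ext j
    have hj := j.2
    rw [chS_mulVec n hn]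
    by_cases h : (j : ℕ) + 1 < n
    · rw [chExt_lt _ _ _ _ h]
      simp only [hx, Pi.smul_apply, smul_eq_mul]; ring
    · have e : (j : ℕ) + 1 = 0 + n := by omega
      rw [e, chExt_add, chExt_lt n hn _ 0 hn]
      simp only [hx, Pi.smul_apply, smul_eq_mul]
      rw [← pow_add, show 2 + 2 * (j : ℕ) = 2 * n by omega, hpow]; simp
  have hT : chT n *ᵥ (Sum.elim x (ω • x)) = ω • Sum.elim x (ω • x) := by
    rw [chT, Matrix.fromBlocks_mulVec]
    ext (j | j)
    · simp
    · simp [hS, pow_two, mul_assoc]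
  refine ⟨Sum.elim x (ω • x), ?_, ?_⟩
  · intro h
    have := congrFun h (Sum.inl ⟨0, hn⟩)
    simp [hx] at this
  · have hT' : (chT n)ᴴ *ᵥ (Sum.elim x (ω • x)) = ω⁻¹ • Sum.elim x (ω • x) := by
      have h1 : (chT n)ᴴ * chT n = 1 := mul_eq_one_comm.1 (chT_mul_star n hn)
      have h2 := congrArg (fun w => (chT n)ᴴ *ᵥ w) hT
      simp only [Matrix.mulVec_mulVec, h1, Matrix.one_mulVec, Matrix.mulVec_smul] at h2
      rw [eq_inv_smul_iff₀ hω0]; exact h2.symm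
    rw [chW_eq, Matrix.add_mulVec, hT, hT', hc, add_smul]

/-- The largest eigenvalue of the Hermitian matrix `W = [[0, Aᴴ], [A, 0]]` is
`2 cos (π / (2n))`. -/
theorem chainW_largest_eigenvalue
    (n : ℕ) (hn : 1 ≤ n) (hW : (chainW n).IsHermitian) :
    (⨆ i, hW.eigenvalues i) = 2 * Real.cos (Real.pi / (2 * n)) := by
  have hub : ∀ i, hW.eigenvalues i ≤ 2 * Real.cos (Real.pi / (2 * n)) := by
    intro i
    refine chW_bound n hn _ (⇑(hW.eigenvectorBasis i)) ?_ ?_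
    · intro h
      apply hW.eigenvectorBasis.orthonormal.ne_zero i
      ext j
      exact congrFun h j
    · have := hW.mulVec_eigenvectorBasis i
      rw [this]
      ext j
      simp
  have : Nonempty (Fin n ⊕ Fin n) := ⟨Sum.inl ⟨0, hn⟩⟩
  obtain ⟨v, hv, hev⟩ := chW_attain n hn
  have hmem : (2 * Real.cos (Real.pi / (2 * n))) ∈ Set.range hW.eigenvalues := by
    rw [← hW.spectrum_real_eq_range_eigenvalues, ← spectrum.algebraMap_mem_iff ℂ,
      ← Matrix.spectrum_toLin']
    apply Module.End.HasEigenvalue.mem_spectrum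
    apply Module.End.hasEigenvalue_of_hasEigenvector (x := v)
    refine ⟨?_, hv⟩
    rw [Module.End.mem_eigenspace_iff, Matrix.toLin'_apply, hev]
    rfl
  obtain ⟨i, hi⟩ := hmem
  apply le_antisymm (ciSup_le hub)
  rw [← hi]
  exact le_ciSup (Set.finite_range _).bddAbove i
end

section
/- Let n ≥ 1, let A be the n×n complex matrix with A_{jj} = 1 for all j, A_{j,j+1} = 1 for j = 1,…,n−1, A_{n,1} = −1, and all other entries 0, and let W be the 2n×2n Hermitian block matrix W = [[0, Aᴴ], [A, 0]]. Then the matrix cos(π/(2n))·I_{2n} − (1/2)·W is positive semidefinite. -/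
open Matrix
open scoped ComplexOrder

theorem chain_u (N : ℕ) (hN : 2 ≤ N) (u : ℕ → ℝ) (h0 : u 0 = 0) (θ : ℝ) (hθ : θ = Real.pi / N)
    (m : ℕ) (hm : m + 1 < N) :
    Real.sin θ * (Real.cos ((m + 1 : ℕ) * θ) / Real.sin ((m + 1 : ℕ) * θ)) * u (m + 1) ^ 2 ≤
    ∑ k ∈ Finset.range (m + 1), (Real.cos θ * (u k ^ 2 + u (k + 1) ^ 2) - 2 * (u k * u (k + 1))) := by
  have hNp : (0 : ℝ) < N := by positivity
  have hpos : ∀ k : ℕ, 0 < k → k < N → 0 < Real.sin (k * θ) := by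
    intro k hk hkN
    have hk' : (0 : ℝ) < k := by exact_mod_cast hk
    have hkN' : (k : ℝ) < N := by exact_mod_cast hkN
    apply Real.sin_pos_of_pos_of_lt_pi
    · rw [hθ]; have := Real.pi_pos; positivity
    · rw [hθ, mul_div_assoc', div_lt_iff₀ hNp, mul_comm]
      exact mul_lt_mul_of_pos_left hkN' Real.pi_pos
  induction m with
  | zero =>
    have h1 := hpos 1 (by norm_num) hm
    simp only [Nat.cast_one, one_mul] at h1
    simp only [zero_add, Finset.range_one, Finset.sum_singleton, h0, Nat.cast_one, one_mul]
    apply le_of_eq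
    field_simp
    ring
  | succ m ih =>
    rw [Finset.sum_range_succ]
    refine le_trans ?_ (add_le_add_left (ih (by omega)) _)
    have hS := hpos (m + 1) (by omega) (by omega)
    have hS' := hpos (m + 1 + 1) (by omega) (by omega)
    have e1 : Real.sin ((m + 1 + 1 : ℕ) * θ) = Real.sin ((m + 1 : ℕ) * θ) * Real.cos θ
        + Real.cos ((m + 1 : ℕ) * θ) * Real.sin θ := by
      rw [← Real.sin_add]; congr 1; push_cast; ring
    have e2 : Real.sin ((m + 1 : ℕ) * θ) = Real.sin ((m + 1 + 1 : ℕ) * θ) * Real.cos θ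
        - Real.cos ((m + 1 + 1 : ℕ) * θ) * Real.sin θ := by
      rw [← Real.sin_sub]; congr 1; push_cast; ring
    generalize Real.sin ((m + 1 + 1 : ℕ) * θ) = S' at *
    generalize Real.sin ((m + 1 : ℕ) * θ) = S at *
    generalize Real.cos ((m + 1 + 1 : ℕ) * θ) = C' at *
    generalize Real.cos ((m + 1 : ℕ) * θ) = C at *
    generalize u (m + 1 + 1) = b
    generalize u (m + 1) = a
    generalize Real.sin θ = s at *
    generalize Real.cos θ = c at *
    have f1 : s * (C / S) = S' / S - c := by field_simp; linarith
    have f2 : s * (C' / S') = c - S / S' := by field_simp; linarith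
    rw [f1, f2]
    have : S' / S * a ^ 2 + S / S' * b ^ 2 - 2 * (a * b) = (S' * a - S * b) ^ 2 / (S * S') := by
      field_simp; ring
    have : 0 ≤ (S' * a - S * b) ^ 2 / (S * S') := by positivity
    nlinarith

theorem chain_z (N : ℕ) (hN : 2 ≤ N) (z : ℕ → ℝ) (hz : z N = - z 0) :
    0 ≤ ∑ k ∈ Finset.range N, (Real.cos (Real.pi / N) * (z k ^ 2 + z (k + 1) ^ 2)
      - 2 * (z k * z (k + 1))) := by
  obtain ⟨θ, hθ⟩ : ∃ θ : ℝ, θ = Real.pi / N := ⟨_, rfl⟩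
  rw [← hθ]
  have hNp : (0 : ℝ) < N := by positivity
  have hNθ : N * θ = Real.pi := by rw [hθ]; field_simp
  let u : ℕ → ℝ := fun k => z k - z 0 * Real.cos (k * θ)
  have hu0 : u 0 = 0 := by simp [u]
  have huN : u N = 0 := by simp [u, hNθ, hz]
  let T : ℕ → ℝ := fun k => Real.sin θ * Real.sin (k * θ) *
    (2 * z 0 * u k + z 0 ^ 2 * Real.cos (k * θ))
  have key : ∀ k : ℕ, Real.cos θ * (z k ^ 2 + z (k + 1) ^ 2) - 2 * (z k * z (k + 1))
     = (Real.cos θ * (u k ^ 2 + u (k + 1) ^ 2) - 2 * (u k * u (k + 1))) - (T (k + 1) - T k) := by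
    intro k
    have e1 : Real.cos ((k + 1 : ℕ) * θ) = Real.cos (k * θ) * Real.cos θ
        - Real.sin (k * θ) * Real.sin θ := by
      rw [← Real.cos_add]; congr 1; push_cast; ring
    have e2 : Real.cos (k * θ) = Real.cos ((k + 1 : ℕ) * θ) * Real.cos θ
        + Real.sin ((k + 1 : ℕ) * θ) * Real.sin θ := by
      rw [← Real.cos_sub]; congr 1; push_cast; ring
    simp only [T, u]
    generalize Real.sin ((k + 1 : ℕ) * θ) = S' at *
    generalize Real.sin (k * θ) = S at *
    generalize Real.cos ((k + 1 : ℕ) * θ) = C' at *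
    generalize Real.cos (k * θ) = C at *
    generalize z (k + 1) = b
    generalize z k = a
    generalize z 0 = p
    generalize Real.sin θ = s at *
    generalize Real.cos θ = c at *
    have g1 : s * S = C * c - C' := by linarith
    have g2 : s * S' = C - C' * c := by linarith
    rw [g1, g2]; ring
  rw [Finset.sum_congr rfl (fun k _ => key k), Finset.sum_sub_distrib, Finset.sum_range_sub]
  have hT : T N - T 0 = 0 := by simp [T, hNθ]
  rw [hT, sub_zero]
  obtain ⟨m, rfl⟩ : ∃ m, N = m + 1 + 1 := ⟨N - 2, by omega⟩
  have h := chain_u (m + 1 + 1) hN u hu0 θ hθ m (by omega)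
  rw [Finset.sum_range_succ, huN]
  have a1 : ((m + 1 : ℕ) : ℝ) * θ = Real.pi - θ := by
    rw [← hNθ]; push_cast; ring
  have hs : 0 < Real.sin θ := by
    apply Real.sin_pos_of_pos_of_lt_pi
    · rw [hθ]; have := Real.pi_pos; positivity
    · rw [hθ]
      apply div_lt_self Real.pi_pos
      push_cast
      have : (0:ℝ) ≤ m := by positivity
      linarith
  rw [a1, Real.cos_pi_sub, Real.sin_pi_sub] at h
  have : Real.sin θ * (-Real.cos θ / Real.sin θ) = - Real.cos θ := by field_simp
  rw [this] at h
  nlinarith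

theorem chain_xy (n : ℕ) (hn : 1 ≤ n) (X Y : ℕ → ℝ) (hX : X n = - X 0) :
    0 ≤ Real.cos (Real.pi / (2 * n)) * ∑ k ∈ Finset.range n, (X k ^ 2 + Y k ^ 2)
      - ∑ k ∈ Finset.range n, Y k * (X k + X (k + 1)) := by
  let z : ℕ → ℝ := fun k => if k % 2 = 0 then X (k / 2) else Y (k / 2)
  have z0 : ∀ k, z (2 * k) = X k := by intro k; simp [z]
  have z1 : ∀ k, z (2 * k + 1) = Y k := by
    intro k
    have : (2 * k + 1) / 2 = k := by omega
    simp [z, this, Nat.add_mod]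
  have z2 : ∀ k, z (2 * k + 1 + 1) = X (k + 1) := fun k => z0 (k + 1)
  have h := chain_z (2 * n) (by omega) z (by rw [z0, hX]; simp [z])
  push_cast at h
  generalize Real.cos (Real.pi / (2 * n)) = c at *
  have key : ∀ m : ℕ, ∑ k ∈ Finset.range (2 * m), (c * (z k ^ 2 + z (k + 1) ^ 2)
      - 2 * (z k * z (k + 1))) = 2 * (c * ∑ k ∈ Finset.range m, (X k ^ 2 + Y k ^ 2)
      - ∑ k ∈ Finset.range m, Y k * (X k + X (k + 1))) + c * (X m ^ 2 - X 0 ^ 2) := by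
    intro m
    induction m with
    | zero => simp
    | succ m ih =>
      rw [show 2 * (m + 1) = 2 * m + 1 + 1 by ring, Finset.sum_range_succ, Finset.sum_range_succ,
        ih, Finset.sum_range_succ, Finset.sum_range_succ, z0, z1, z2]
      ring
  rw [key, hX] at h
  linarith [h, show c * ((-X 0) ^ 2 - X 0 ^ 2) = 0 by ring]

theorem chainA_mulVec_s11 (n : ℕ) (hn : 1 ≤ n) (x : Fin n → ℂ) (X : ℕ → ℂ)
    (hx : ∀ j : Fin n, X j = x j) (hX : X n = - X 0) (j : Fin n) :
    (chainA n *ᵥ x) j = X j + X (j + 1) := by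
  have h : ∀ k : Fin n, chainA n j k * x k = (if j = k then x k else 0)
     + (if (k : ℕ) = (j : ℕ) + 1 then x k else 0)
      - (if (j : ℕ) = n - 1 ∧ (k : ℕ) = 0 then x k else 0) := by
    intro k
    simp only [chainA, Matrix.of_apply, sub_mul, add_mul, ite_mul, one_mul, zero_mul]
  simp only [Matrix.mulVec, dotProduct]
  rw [Finset.sum_congr rfl (fun k _ => h k), Finset.sum_sub_distrib, Finset.sum_add_distrib,
    Finset.sum_ite_eq]
  simp only [Finset.mem_univ, if_true, hx]
  by_cases hj : (j : ℕ) + 1 < n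
  · have e1 : ∀ k : Fin n, ((k : ℕ) = (j : ℕ) + 1) ↔ (⟨j + 1, hj⟩ = k) := by
      intro k; rw [Fin.ext_iff]; exact eq_comm
    have e2 : ¬ ((j : ℕ) = n - 1) := by omega
    simp only [e1, e2, false_and, if_false, Finset.sum_const_zero, Finset.sum_ite_eq,
      Finset.mem_univ, if_true, ← hx, sub_zero]
  · have e1 : ∀ k : Fin n, ¬ ((k : ℕ) = n) := by intro k; omega
    have e2 : (j : ℕ) = n - 1 := by omega
    have e3 : ∀ k : Fin n, ((k : ℕ) = 0) ↔ (⟨0, hn⟩ = k) := by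
      intro k; rw [Fin.ext_iff]; exact eq_comm
    have e4 : (j : ℕ) + 1 = n := by omega
    rw [e4, hX]

    simp only [e1, e2, e3, true_and, if_false, Finset.sum_const_zero, Finset.sum_ite_eq,
      Finset.mem_univ, if_true, ← hx]
    ring

/-- Feasibility of the dual solution `λ' = cos(π/(2n))·(1,…,1)` for the chained CHSH
semidefinite program: `cos(π/(2n))·I - (1/2)·W` is positive semidefinite. -/
theorem chainW_dual_feasible (n : ℕ) (hn : 1 ≤ n) :
    (((Real.cos (Real.pi / (2 * n)) : ℂ) • (1 : Matrix (Fin n ⊕ Fin n) (Fin n ⊕ Fin n) ℂ))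
        - (1 / 2 : ℂ) • chainW n).PosSemidef := by
  apply Matrix.PosSemidef.of_dotProduct_mulVec_nonneg
  · unfold Matrix.IsHermitian
    simp only [Matrix.conjTranspose_sub, Matrix.conjTranspose_smul, Matrix.conjTranspose_one, chainW,
      Matrix.fromBlocks_conjTranspose, Matrix.conjTranspose_conjTranspose,
      Matrix.conjTranspose_zero]
    simp [← Complex.ofReal_cos, -Complex.ofReal_cos]
  · intro v
    obtain ⟨x, hxd⟩ : ∃ x : Fin n → ℂ, x = v ∘ Sum.inl := ⟨_, rfl⟩
    obtain ⟨y, hyd⟩ : ∃ y : Fin n → ℂ, y = v ∘ Sum.inr := ⟨_, rfl⟩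
    have hv : v = Sum.elim x y := by rw [hxd, hyd]; simp
    let X : ℕ → ℂ := fun k => if h : k < n then x ⟨k, h⟩ else - x ⟨0, hn⟩
    let Y : ℕ → ℂ := fun k => if h : k < n then y ⟨k, h⟩ else 0
    have hx : ∀ j : Fin n, X j = x j := by intro j; simp [X]
    have hy : ∀ j : Fin n, Y j = y j := by intro j; simp [Y]
    have hX : X n = - X 0 := by
      have : 0 < n := hn
      simp [X, this]
    have r1 := chain_xy n hn (fun k => (X k).re) (fun k => (Y k).re) (by simp [hX])
    have r2 := chain_xy n hn (fun k => (X k).im) (fun k => (Y k).im) (by simp [hX])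
    have hA : star y ⬝ᵥ (chainA n *ᵥ x) = ∑ k ∈ Finset.range n, star (Y k) * (X k + X (k + 1)) := by
      rw [← Fin.sum_univ_eq_sum_range (fun k => star (Y k) * (X k + X (k + 1)))]
      simp only [dotProduct]
      refine Finset.sum_congr rfl fun j _ => ?_
      rw [chainA_mulVec_s11 n hn x X hx hX j, hy]; rfl
    have hA' : star x ⬝ᵥ ((chainA n)ᴴ *ᵥ y) = star (star y ⬝ᵥ (chainA n *ᵥ x)) := by
      rw [Matrix.star_dotProduct, Matrix.star_mulVec, Matrix.dotProduct_mulVec,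
        Matrix.conjTranspose_conjTranspose]
    have hxx : star x ⬝ᵥ x = ∑ k ∈ Finset.range n, star (X k) * X k := by
      rw [← Fin.sum_univ_eq_sum_range (fun k => star (X k) * X k)]
      simp only [dotProduct, hx]; rfl
    have hyy : star y ⬝ᵥ y = ∑ k ∈ Finset.range n, star (Y k) * Y k := by
      rw [← Fin.sum_univ_eq_sum_range (fun k => star (Y k) * Y k)]
      simp only [dotProduct, hy]; rfl
    have hstar : star (Sum.elim x y) = Sum.elim (star x) (star y) := by
      ext i; cases i <;> rfl
    have tot : star v ⬝ᵥ ((((Real.cos (Real.pi / (2 * n)) : ℂ) •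
        (1 : Matrix (Fin n ⊕ Fin n) (Fin n ⊕ Fin n) ℂ)) - (1 / 2 : ℂ) • chainW n) *ᵥ v)
        = (Real.cos (Real.pi / (2 * n)) : ℂ) * (star x ⬝ᵥ x + star y ⬝ᵥ y)
          - (1 / 2 : ℂ) * (star (star y ⬝ᵥ (chainA n *ᵥ x)) + star y ⬝ᵥ (chainA n *ᵥ x)) := by
      rw [Matrix.sub_mulVec, Matrix.smul_mulVec, Matrix.smul_mulVec, Matrix.one_mulVec, chainW, hv,
        Matrix.fromBlocks_mulVec, hstar, dotProduct_sub, dotProduct_smul, dotProduct_smul,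
        sumElim_dotProduct_sumElim, sumElim_dotProduct_sumElim, ← hA']
      simp
    rw [tot, hA, hxx, hyy, ← Finset.sum_add_distrib]
    generalize Real.cos (Real.pi / (2 * n)) = c at *
    rw [Complex.le_def]
    constructor
    · have := add_nonneg r1 r2
      refine this.trans (le_of_eq ?_)
      have q : ∀ w : ℂ, (1 / 2 : ℂ) * (star w + w) = (w.re : ℂ) := by
        intro w; apply Complex.ext <;> simp; ring
      rw [q, Complex.sub_re, Complex.re_ofReal_mul, Complex.re_sum, Complex.ofReal_re, Complex.re_sum]
      rw [sub_add_sub_comm, ← mul_add, ← Finset.sum_add_distrib, ← Finset.sum_add_distrib]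
      congr 1
      · congr 1
        refine Finset.sum_congr rfl fun k _ => ?_
        simp; ring
      · refine Finset.sum_congr rfl fun k _ => ?_
        simp
    · have q : ∀ w : ℂ, (1 / 2 : ℂ) * (star w + w) = (w.re : ℂ) := by
        intro w; apply Complex.ext <;> simp; ring
      rw [q, Complex.sub_im, Complex.im_ofReal_mul, Complex.im_sum, Complex.ofReal_im]
      rw [Finset.sum_eq_zero]
      · simp
      · intro k _
        simp; ring
end

section
/- Let W be the 4×4 real symmetric matrix with rows (0,0,1,1), (0,0,1,−1), (1,1,0,0), (1,−1,0,0). Then the matrix (1/√2)·I_4 − (1/2)·W is positive semidefinite. -/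
open Matrix

/-- Feasibility of the dual solution `λ' = (1/√2)·(1,1,1,1)` for the CHSH semidefinite
program: with `W` the CHSH coefficient matrix, `(1/√2)·I - (1/2)·W` is positive
semidefinite. This certifies Tsirelson's bound `2√2`. -/
theorem chsh_dual_feasible
    (W : Matrix (Fin 4) (Fin 4) ℝ)
    (hW : W = !![0, 0, 1, 1; 0, 0, 1, -1; 1, 1, 0, 0; 1, -1, 0, 0]) :
    ((1 / Real.sqrt 2) • (1 : Matrix (Fin 4) (Fin 4) ℝ) - (1 / 2 : ℝ) • W).PosSemidef := by
  subst hW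
  have hs : Real.sqrt 2 * Real.sqrt 2 = 2 := Real.mul_self_sqrt (by norm_num)
  have hc : 1 / Real.sqrt 2 = Real.sqrt 2 / 2 := by
    have h0 : Real.sqrt 2 ≠ 0 := by positivity
    field_simp
    nlinarith
  rw [hc]
  have hn : 0 ≤ Real.sqrt 2 := Real.sqrt_nonneg 2
  generalize Real.sqrt 2 = s at *
  refine .of_dotProduct_mulVec_nonneg ?_ fun x => ?_
  · ext i j
    fin_cases i <;> fin_cases j <;> simp
  · have key : star x ⬝ᵥ (((s / 2) • (1 : Matrix (Fin 4) (Fin 4) ℝ) - (1 / 2 : ℝ) •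
        !![0, 0, 1, 1; 0, 0, 1, -1; 1, 1, 0, 0; 1, -1, 0, 0]) *ᵥ x)
        = s / 2 * ((x 0 - s / 2 * (x 2 + x 3)) ^ 2 + (x 1 - s / 2 * (x 2 - x 3)) ^ 2) := by
      simp [dotProduct, mulVec, Fin.sum_univ_four, Matrix.one_apply]
      linear_combination (x 0 * (x 2 + x 3) / 2 + x 1 * (x 2 - x 3) / 2
        - s / 4 * (x 2 ^ 2 + x 3 ^ 2)) * hs
    rw [key]
    positivity
end

section
/- Let n ≥ 1 and let A be the n×n complex matrix with A_{jj} = 1 for all j, A_{j,j+1} = 1 for j = 1,…,n−1, A_{n,1} = −1, and all other entries 0. Then the largest singular value of A (equivalently, the operator norm of A as a linear map on Euclidean ℂ^n) equals 2·cos(π/(2n)). -/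
open Matrix

theorem chain_entry (m : ℕ) (j k : Fin (m+1)) :
    chainA (m+1) j k = (if k = j then 1 else 0) +
      (if k = j + 1 then (if j = Fin.last m then (-1:ℂ) else 1) else 0) := by
  have hk := k.2
  simp only [chainA, Matrix.of_apply]
  by_cases hj : j = Fin.last m
  · subst hj
    have h0 : (k : ℕ) ≠ m + 1 := by omega
    have h1 : ((k : ℕ) = 0) ↔ k = 0 := by rw [Fin.ext_iff]; simp
    simp [h0, h1, eq_comm (a := Fin.last m)]
    split_ifs <;> ring
  · have hjm : (j : ℕ) ≠ m := fun h => hj (Fin.ext (by simpa using h))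
    have h2 : ((k : ℕ) = j + 1) ↔ k = j + 1 := by
      rw [Fin.ext_iff, Fin.val_add_one_of_lt (by
        rw [Fin.lt_def]; have := j.2; simp only [Fin.val_last]; omega)]
    simp [hj, hjm, h2, eq_comm (a := j)]

theorem chain_mulVec (m : ℕ) (v : Fin (m+1) → ℂ) (j : Fin (m+1)) :
    (chainA (m+1) *ᵥ v) j = v j + (if j = Fin.last m then (-1:ℂ) else 1) * v (j+1) := by
  simp only [Matrix.mulVec, dotProduct, chain_entry, add_mul, Finset.sum_add_distrib, ite_mul,
    zero_mul, Finset.sum_ite_eq', Finset.mem_univ, if_true, one_mul]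

def chainS (m : ℕ) : Matrix (Fin (m+1)) (Fin (m+1)) ℂ :=
  Matrix.of fun j k => (if k = j + 1 then (if j = Fin.last m then (-1:ℂ) else 1) else 0)

theorem chain_eq (m : ℕ) : chainA (m+1) = 1 + chainS m := by
  ext j k
  rw [chain_entry]
  simp [chainS, Matrix.one_apply, eq_comm (a := j)]

theorem chainS_unit (m : ℕ) : chainS m * star (chainS m) = 1 := by
  ext j k
  simp only [Matrix.mul_apply, Matrix.star_apply, chainS, Matrix.of_apply, ite_mul, zero_mul,
    Finset.sum_ite_eq', Finset.mem_univ, if_true, Matrix.one_apply, add_left_inj]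
  by_cases h : j = k
  · subst h
    by_cases h : j = Fin.last m <;> simp [h]
  · simp [h]

theorem chain_normal (m : ℕ) : IsStarNormal (chainA (m+1)) := by
  have h1 := chainS_unit m
  have h2 := mul_eq_one_comm.mp h1
  constructor
  rw [commute_iff_eq, chain_eq]
  simp only [star_add, star_one, add_mul, mul_add, h1, h2, one_mul, mul_one]
  abel

theorem norm_of_pow (n : ℕ) (hn : 1 ≤ n) (z : ℂ) (hz : z ^ n = -1) :
    ‖1 + z‖ ≤ 2 * Real.cos (Real.pi / (2 * n)) := by
  have hn' : (1:ℝ) ≤ n := by exact_mod_cast hn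
  have hpi := Real.pi_pos
  have hnz : ‖z‖ = 1 := by
    have : ‖z‖ ^ n = 1 := by rw [← norm_pow, hz]; simp
    exact (pow_eq_one_iff_of_nonneg (norm_nonneg _) (by omega)).mp this
  have hze : Complex.exp (z.arg * Complex.I) = z := by
    have := Complex.norm_mul_exp_arg_mul_I z
    simpa [hnz] using this
  have hre : Real.cos |z.arg| = z.re := by
    rw [Real.cos_abs, ← Complex.exp_ofReal_mul_I_re, hze]
  have hcn : Real.cos (n * |z.arg|) = -1 := by
    have : n * |z.arg| = |n * z.arg| := by rw [abs_mul, Nat.abs_cast]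
    rw [this, Real.cos_abs, ← Complex.exp_ofReal_mul_I_re]
    push_cast
    rw [mul_assoc, Complex.exp_nat_mul, hze, hz]; simp
  have hge : Real.pi / n ≤ |z.arg| := by
    by_contra! h
    have h' : n * |z.arg| < Real.pi := by
      rw [lt_div_iff₀ (by linarith)] at h; linarith
    have := Real.cos_lt_cos_of_nonneg_of_le_pi (by positivity) le_rfl h'
    rw [Real.cos_pi] at this; linarith
  have hle : z.re ≤ Real.cos (Real.pi / n) := by
    rw [← hre]
    exact Real.cos_le_cos_of_nonneg_of_le_pi (by positivity) (Complex.abs_arg_le_pi z) hge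
  have hc : 0 ≤ Real.cos (Real.pi / (2 * n)) := by
    apply Real.cos_nonneg_of_neg_pi_div_two_le_of_le
    · have : 0 ≤ Real.pi / (2 * n) := by positivity
      linarith
    · apply div_le_div_of_nonneg_left <;> linarith
  have hd : Real.cos (Real.pi / n) = 2 * Real.cos (Real.pi / (2 * n)) ^ 2 - 1 := by
    rw [← Real.cos_two_mul]
    congr 1
    field_simp
  refine le_of_sq_le_sq ?_ (by positivity)
  have e1 : ‖z‖ ^ 2 = z.re ^ 2 + z.im ^ 2 := by rw [Complex.sq_norm, Complex.normSq_apply]; ring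
  have e2 : ‖1 + z‖ ^ 2 = (1 + z.re) ^ 2 + z.im ^ 2 := by
    rw [Complex.sq_norm, Complex.normSq_apply]; simp; ring
  rw [hnz] at e1
  nlinarith

theorem chain_eig (m : ℕ) (v : Fin (m+1) → ℂ) (hv : v ≠ 0) (l : ℂ)
    (h : chainA (m+1) *ᵥ v = l • v) : (l - 1) ^ (m+1) = -1 := by
  have hj (j) : (if j = Fin.last m then (-1:ℂ) else 1) * v (j+1) = (l - 1) * v j := by
    have := congrFun h j
    rw [chain_mulVec] at this
    simp only [Pi.smul_apply, smul_eq_mul] at this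
    linear_combination this
  have hp : ∀ k (hk : k < m+1), v ⟨k, hk⟩ = (l-1)^k * v 0 := by
    intro k
    induction k with
    | zero => intro hk; simp
    | succ k ih =>
      intro hk
      have := hj ⟨k, by omega⟩
      rw [if_neg (by rw [Fin.ext_iff]; simp; omega), ih] at this
      have e : (⟨k, by omega⟩ : Fin (m+1)) + 1 = ⟨k+1, hk⟩ := by
        apply Fin.ext
        rw [Fin.val_add_one_of_lt (by rw [Fin.lt_def]; simp; omega)]
      rw [e] at this
      rw [pow_succ]; linear_combination this
  have h0 : v 0 ≠ 0 := by
    intro h0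
    apply hv
    ext ⟨k, hk⟩
    rw [hp, h0]; simp
  have hl := hj (Fin.last m)
  have hm : v (Fin.last m) = (l-1)^m * v 0 := hp m (by omega)
  rw [if_pos rfl, Fin.last_add_one, hm] at hl
  apply mul_right_cancel₀ h0
  rw [pow_succ]; linear_combination -hl

theorem chain_eig' (m : ℕ) (z : ℂ) (hz : z ^ (m+1) = -1) :
    chainA (m+1) *ᵥ (fun j => z ^ (j:ℕ)) = (1 + z) • (fun j : Fin (m+1) => z ^ (j:ℕ)) := by
  ext j
  rw [chain_mulVec]
  simp only [Pi.smul_apply, smul_eq_mul]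
  by_cases hj : j = Fin.last m
  · subst hj
    simp
    rw [pow_succ] at hz; linear_combination -hz
  · rw [if_neg hj, Fin.val_add_one_of_lt (Fin.lt_last_iff_ne_last.mpr hj)]
    ring

/-- The largest singular value of the chained CHSH matrix `A`, i.e. its operator norm as
a linear map on Euclidean `ℂ^n`, equals `2 cos (π / (2n))`. -/
theorem chainA_opNorm (n : ℕ) (hn : 1 ≤ n) :
    ‖Matrix.toEuclideanCLM (𝕜 := ℂ) (chainA n)‖ = 2 * Real.cos (Real.pi / (2 * n)) := by
  obtain ⟨m, rfl⟩ : ∃ m, n = m + 1 := ⟨n - 1, by omega⟩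
  set T := Matrix.toEuclideanCLM (𝕜 := ℂ) (chainA (m+1)) with hT
  apply le_antisymm
  · haveI := chain_normal m
    haveI : IsStarNormal T := by
      constructor
      rw [commute_iff_eq, hT, ← map_star, ← map_mul, ← map_mul, (chain_normal m).star_comm_self.eq]
    obtain ⟨l, hl, hr⟩ := spectrum.exists_nnnorm_eq_spectralRadius T
    rw [IsStarNormal.spectralRadius_eq_nnnorm] at hr
    have hr' : ‖l‖ = ‖T‖ := by
      have : ‖l‖₊ = ‖T‖₊ := by exact_mod_cast hr
      exact congrArg NNReal.toReal this
    rw [hT, AlgEquiv.spectrum_eq, ← Matrix.spectrum_toLin',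
      ← Module.End.hasEigenvalue_iff_mem_spectrum] at hl
    obtain ⟨v, hv⟩ := hl.exists_hasEigenvector
    have h1 := hv.apply_eq_smul
    rw [Matrix.toLin'_apply] at h1
    have := norm_of_pow (m+1) hn (l-1) (chain_eig m v hv.2 l h1)
    rw [← hr']
    simpa using this
  · set t : ℝ := Real.pi / (2 * ((m+1 : ℕ):ℝ)) with ht
    have hm : (((m+1 : ℕ):ℝ)) ≠ 0 := by positivity
    set z : ℂ := Complex.exp ((2 * t : ℝ) * Complex.I) with hzd
    have hz : z ^ (m+1) = -1 := by
      rw [hzd, ← Complex.exp_nat_mul, ← Complex.exp_pi_mul_I, ← mul_assoc, ← Complex.ofReal_natCast,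
        ← Complex.ofReal_mul]
      congr 3
      rw [ht]; field_simp
    have hv := chain_eig' m z hz
    set w : EuclideanSpace ℂ (Fin (m+1)) := WithLp.toLp 2 (fun j : Fin (m+1) => z ^ (j:ℕ)) with hw
    have hTw : T w = (1 + z) • w := by
      rw [hT, hw, Matrix.toEuclideanCLM_toLp, hv]; rfl
    have hw0 : 0 < ‖w‖ := by
      rw [norm_pos_iff]
      intro h
      have := congrArg (fun x : EuclideanSpace ℂ (Fin (m+1)) => x 0) h
      simp [hw] at this
    have h1 := T.le_opNorm w
    rw [hTw, norm_smul] at h1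
    have h2 := le_of_mul_le_mul_right h1 hw0
    refine le_trans ?_ h2
    have e : 1 + z = Complex.exp (t * Complex.I) * (2 * Real.cos t : ℝ) := by
      rw [hzd]; push_cast
      rw [Complex.two_cos, mul_add, ← Complex.exp_add, ← Complex.exp_add]
      rw [show (t:ℂ) * Complex.I + -t * Complex.I = 0 by ring, Complex.exp_zero]
      rw [show (2 * t:ℂ) * Complex.I = t * Complex.I + t * Complex.I by ring]
      ring
    rw [e, norm_mul, Complex.norm_exp_ofReal_mul_I, one_mul, Complex.norm_real]
    exact le_abs_self _
end

section
/- Let n ≥ 1 and let a_1,…,a_n, b_1,…,b_n ∈ {−1, 1}. Then |∑_{i=1}^{n} a_i·b_i + ∑_{i=1}^{n-1} a_{i+1}·b_i − a_1·b_n| ≤ 2n − 2. -/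
/-- The classical (local hidden variable) bound for the chained CHSH inequality with `n`
measurement settings: for deterministic outcomes `a i, b i ∈ {-1, 1}`,
`|∑ a i b i + ∑ a (i+1) b i - a 0 b (n-1)| ≤ 2n - 2`. -/
theorem chained_chsh_classical_bound
    (n : ℕ) (hn : 1 ≤ n) (a b : ℕ → ℝ)
    (ha : ∀ i < n, a i = 1 ∨ a i = -1) (hb : ∀ i < n, b i = 1 ∨ b i = -1) :
    |(∑ i ∈ Finset.range n, a i * b i) + (∑ i ∈ Finset.range (n - 1), a (i + 1) * b i)
        - a 0 * b (n - 1)| ≤ 2 * n - 2 := by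
  obtain ⟨m, rfl⟩ : ∃ m, n = m + 1 := ⟨n - 1, by omega⟩
  clear hn
  simp only [Nat.add_sub_cancel]
  induction m with
  | zero => simp
  | succ m ih =>
    have h := ih (fun i hi => ha i (by omega)) (fun i hi => hb i (by omega))
    rw [Finset.sum_range_succ _ (m + 1), Finset.sum_range_succ (fun i => a (i + 1) * b i) m]
    rw [abs_le] at h ⊢
    push_cast at h ⊢
    obtain ⟨h1, h2⟩ := h
    have hc : -2 ≤ a (m+1) * b (m+1) + a (m+1) * b m - a 0 * b (m+1) + a 0 * b m ∧
        a (m+1) * b (m+1) + a (m+1) * b m - a 0 * b (m+1) + a 0 * b m ≤ 2 := by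
      rcases ha 0 (by omega) with h | h <;> rcases ha (m+1) (by omega) with h' | h' <;>
      rcases hb m (by omega) with k | k <;> rcases hb (m+1) (by omega) with k' | k' <;>
      rw [h, h', k, k'] <;> norm_num
    constructor <;> linarith [hc.1, hc.2]
end
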